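/- Let Φ, Φ̃ : ℂⁿ → ℝ be strictly plurisubharmonic quadratic forms with Φ̃ ≤ Φ pointwise, and let κ♭ : ℂⁿ → ℂⁿ be an ℝ-linear isomorphism with κ♭(Rad(Φ − Φ̃)) = Rad(Φ − Φ̃). Suppose: (i) Ψ is a holomorphic quadratic form on ℂ^{2n} and â ∈ ℂ with 2 Re Ψ(z, w̄) = Φ̃(z) + Φ(w) − R(z, w) where R is a nonnegative quadratic form satisfying c|z − κ♭(w)|² ≤ R(z, w) ≤ C|z − κ♭(w)|² for some C, c > 0; (ii) Ψ̃ is a holomorphic quadratic form on ℂ^{2n} and ã ∈ ℂ with 2 Re Ψ̃(z, w̄) − Φ(z) − Φ̃(w) ≤ −c'|z − (κ♭)^{-1}(w)|² for some c' > 0; (iii) with G u(z) = â ∫ e^{2Ψ(z,w̄)} u(w) e^{-2Φ(w)} dL(w) and G̃ v(z) = ã ∫ e^{2Ψ̃(z,w̄)} v(w) e^{-2Φ̃(w)} dL(w), one has G̃(G u) = u for every entire u with |u(z)| ≤ C₀⟨z⟩^{N} e^{Φ(z)} for some C₀ > 0, N ∈ ℝ. Then for every such u, WF^{1/2}_Φ(Gu)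 = κ♭(WF^{1/2}_Φ(u)) ∩ Rad(Φ − Φ̃). -/

import Mathlib

open Matrix MeasureTheory ENNReal

noncomputable section

/-- The squared Euclidean norm `|z|²` on `ℂⁿ`. -/
def eSq {n : ℕ} (z : Fin n → ℂ) : ℝ := ∑ i, Complex.normSq (z i)

/-- The Japanese bracket `⟨z⟩ = (1 + |z|²)^{1/2}`. -/
def jb {n : ℕ} (z : Fin n → ℂ) : ℝ := Real.sqrt (1 + eSq z)

/-- `Φ : ℂⁿ → ℝ` is a (real) quadratic form of the underlying real coordinates. -/
def IsRQuad {n : ℕ} (Φ : (Fin n → ℂ) → ℝ) : Prop :=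
  ∃ B : (Fin n → ℂ) →ₗ[ℝ] (Fin n → ℂ) →ₗ[ℝ] ℝ, ∀ z, Φ z = B z z

/-- `Φ : ℂⁿ → ℝ` is a strictly plurisubharmonic quadratic form.  For a quadratic form `Φ`,
the Levi form satisfies `(∂²_{z z̄}Φ) w ⋅ w̄ = (Φ(w) + Φ(i w))/2`, so positive definiteness of
the Levi matrix is equivalent to `Φ(w) + Φ(i·w) > 0` for all `w ≠ 0`. -/
def IsSPSH {n : ℕ} (Φ : (Fin n → ℂ) → ℝ) : Prop :=
  IsRQuad Φ ∧ ∀ z : Fin n → ℂ, z ≠ 0 → 0 < Φ z + Φ (Complex.I • z)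

/-- The squared weighted norm `‖u‖_s² = ∫ |u(z)|² ⟨z⟩^{2s} e^{-2Φ(z)} L(dz)` (in `ℝ≥0∞`). -/
def hnorm {n : ℕ} (Φ : (Fin n → ℂ) → ℝ) (s : ℝ) (u : (Fin n → ℂ) → ℂ) : ℝ≥0∞ :=
  ∫⁻ z : Fin n → ℂ, (‖u z‖₊ : ℝ≥0∞) ^ 2 * ENNReal.ofReal (jb z ^ (2 * s) * Real.exp (-2 * Φ z))

/-- A conic subset of `ℂⁿ`. -/
def IsConic {n : ℕ} (V : Set (Fin n → ℂ)) : Prop := ∀ z ∈ V, ∀ t : ℝ, 0 < t → t • z ∈ V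

/-- The `1/2`-Gelfand–Shilov wavefront set of `u` relative to `Φ`: the complement in
`ℂⁿ∖{0}` of the points having an open conic neighborhood in `ℂⁿ∖{0}` on which
`|u(z)| ≤ C e^{Φ(z) - c|z|²}`. -/
def wf {n : ℕ} (Φ : (Fin n → ℂ) → ℝ) (u : (Fin n → ℂ) → ℂ) : Set (Fin n → ℂ) :=
  {z₀ | z₀ ≠ 0 ∧ ¬ ∃ V : Set (Fin n → ℂ), IsOpen V ∧ IsConic V ∧ (0 : Fin n → ℂ) ∉ V ∧ z₀ ∈ V ∧
      ∃ C c : ℝ, 0 < C ∧ 0 < c ∧ ∀ z ∈ V, ‖u z‖ ≤ C * Real.exp (Φ z - c * eSq z)}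

/-- A holomorphic quadratic form on `ℂ^{2n} = ℂⁿ_z × ℂⁿ_θ`. -/
def IsCQuad2 {n : ℕ} (Ψ : (Fin n → ℂ) → (Fin n → ℂ) → ℂ) : Prop :=
  ∃ B : ((Fin n → ℂ) × (Fin n → ℂ)) →ₗ[ℂ] ((Fin n → ℂ) × (Fin n → ℂ)) →ₗ[ℂ] ℂ,
    ∀ z θ, Ψ z θ = B (z, θ) (z, θ)

/-- A real quadratic form on `ℂⁿ × ℂⁿ` viewed as a real vector space. -/
def IsRQuadPair {n : ℕ} (R : (Fin n → ℂ) → (Fin n → ℂ) → ℝ) : Prop :=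
  ∃ B : ((Fin n → ℂ) × (Fin n → ℂ)) →ₗ[ℝ] ((Fin n → ℂ) × (Fin n → ℂ)) →ₗ[ℝ] ℝ,
    ∀ z w, R z w = B (z, w) (z, w)

/-- The Bergman-form integral operator
`G u (z) = a ∫ e^{2Ψ(z, w̄)} u(w) e^{-2Φ(w)} L(dw)`. -/
def berg {n : ℕ} (a : ℂ) (Ψ : (Fin n → ℂ) → (Fin n → ℂ) → ℂ) (Φ : (Fin n → ℂ) → ℝ)
    (u : (Fin n → ℂ) → ℂ) (z : Fin n → ℂ) : ℂ :=
  a * ∫ w : Fin n → ℂ, Complex.exp (2 * Ψ z (star w)) * u w * (Real.exp (-2 * Φ w) : ℂ)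

lemma aux_le_eSq {n : ℕ} (z : Fin n → ℂ) : ‖z‖ ^ 2 ≤ eSq z := by
  have h0 : 0 ≤ eSq z := Finset.sum_nonneg fun i _ => Complex.normSq_nonneg _
  have h : ‖z‖ ≤ Real.sqrt (eSq z) := by
    rw [pi_norm_le_iff_of_nonneg (Real.sqrt_nonneg _)]
    intro i
    apply Real.le_sqrt_of_sq_le
    rw [← Complex.normSq_eq_norm_sq]
    exact Finset.single_le_sum (f := fun i => Complex.normSq (z i))
      (fun i _ => Complex.normSq_nonneg _) (Finset.mem_univ i)
  calc ‖z‖ ^ 2 ≤ Real.sqrt (eSq z) ^ 2 := by gcongr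
    _ = eSq z := Real.sq_sqrt h0

lemma aux_eSq_le {n : ℕ} (z : Fin n → ℂ) : eSq z ≤ (n + 1) * ‖z‖ ^ 2 := by
  have : eSq z ≤ ∑ _i : Fin n, ‖z‖ ^ 2 := by
    unfold eSq
    gcongr with i
    rw [Complex.normSq_eq_norm_sq]
    gcongr
    exact norm_le_pi_norm z i
  simp at this
  nlinarith [sq_nonneg ‖z‖]

lemma aux_integrable {n : ℕ} (δ : ℝ) (hδ : 0 < δ) :
    Integrable (fun w : Fin n → ℂ => Real.exp (-δ * ‖w‖ ^ 2)) := by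
  have h1 : Integrable (fun w : Fin n → ℂ => ∏ i, Real.exp (-(δ / (n + 1)) * ‖w i‖ ^ 2)) := by
    apply Integrable.fintype_prod (f := fun _ (x : ℂ) => Real.exp (-(δ / (n + 1)) * ‖x‖ ^ 2))
    intro i
    have hp : 0 < δ / (n + 1) := by positivity
    have := (GaussianFourier.integrable_cexp_neg_mul_sq_norm_add (V := ℂ)
      (b := ((δ / (n + 1) : ℝ) : ℂ)) (by rw [Complex.ofReal_re]; exact hp) 0 0).norm
    refine this.congr (Filter.Eventually.of_forall fun x => ?_)
    simp only [Complex.norm_exp]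
    congr 1
    simp [← Complex.ofReal_pow, -Complex.ofReal_div]
  refine h1.mono' (by fun_prop) (Filter.Eventually.of_forall fun w => ?_)
  rw [Real.norm_eq_abs, Real.abs_exp, ← Real.exp_sum]
  apply Real.exp_le_exp.2
  rw [← Finset.mul_sum]
  have := aux_eSq_le w
  have h2 : ∑ i, ‖w i‖ ^ 2 = eSq w := by
    unfold eSq; simp [Complex.normSq_eq_norm_sq]
  rw [h2]
  have hp : 0 < δ / (n + 1) := by positivity
  have h3 : δ = δ / (n + 1) * (n + 1) := by field_simp
  nlinarith [mul_le_mul_of_nonneg_left this hp.le]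

lemma aux_jb {n : ℕ} (N : ℝ) (ε : ℝ) (hε : 0 < ε) :
    ∃ K : ℝ, 0 < K ∧ ∀ z : Fin n → ℂ, jb z ^ N ≤ K * Real.exp (ε * ‖z‖ ^ 2) := by
  obtain ⟨k, hk⟩ := exists_nat_ge N
  set e := ε / (n + 1) with he
  have hep : 0 < e := by positivity
  refine ⟨(k.factorial / e ^ k) * Real.exp e, by positivity, fun z => ?_⟩
  have h0 : 0 ≤ eSq z := (sq_nonneg _).trans (aux_le_eSq z)
  have hj : 1 ≤ jb z := Real.one_le_sqrt.2 (by linarith)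
  have h1 : jb z ^ N ≤ (1 + eSq z) ^ k := by
    calc jb z ^ N ≤ jb z ^ ((2 * k : ℕ) : ℝ) := by
          apply Real.rpow_le_rpow_of_exponent_le hj
          push_cast
          have : (0:ℝ) ≤ k := by positivity
          linarith
      _ = (1 + eSq z) ^ k := by
          rw [Real.rpow_natCast, pow_mul, jb, Real.sq_sqrt (by linarith)]
  have h2 := Real.pow_div_factorial_le_exp (e * (1 + eSq z)) (by positivity) k
  have h3 : (1 + eSq z) ^ k ≤ (k.factorial / e ^ k) * Real.exp (e * (1 + eSq z)) := by
    have : (1 + eSq z) ^ k = (k.factorial / e ^ k) * ((e * (1 + eSq z)) ^ k / k.factorial) := by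
      rw [mul_pow]
      have : (k.factorial : ℝ) ≠ 0 := by positivity
      field_simp
    rw [this]
    gcongr
  refine h1.trans (h3.trans ?_)
  rw [mul_assoc, ← Real.exp_add]
  gcongr
  have h4 : ε = e * (n + 1) := by rw [he]; field_simp
  have := mul_le_mul_of_nonneg_left (aux_eSq_le z) hep.le
  rw [h4]; nlinarith

lemma aux_exp {K K' x y : ℝ} (h0 : 0 ≤ K) (h : K ≤ K') (hxy : x ≤ y) :
    K * Real.exp x ≤ K' * Real.exp y :=
  mul_le_mul h (Real.exp_le_exp.2 hxy) (Real.exp_pos _).le (h0.trans h)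

lemma aux_berg {n : ℕ} (a : ℂ) (Ψ : (Fin n → ℂ) → (Fin n → ℂ) → ℂ)
    (φ₁ φ₂ : (Fin n → ℂ) → ℝ) (κ : (Fin n → ℂ) ≃ₗ[ℝ] (Fin n → ℂ)) (c : ℝ) (hc : 0 < c)
    (h : ∀ z w, 2 * (Ψ z (star w)).re - φ₁ z - φ₂ w ≤ -c * eSq (z - κ w))
    (f : (Fin n → ℂ) → ℂ) (δ : ℝ) (hδ : 0 < δ) :
    ∃ I : ℝ, 0 < I ∧ ∀ (z : Fin n → ℂ) (K : ℝ), 0 ≤ K →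
      (∀ w, ‖f w‖ ≤ K * Real.exp (φ₂ w + c * ‖z - κ w‖ ^ 2 - δ * ‖w‖ ^ 2)) →
      ‖berg a Ψ φ₂ f z‖ ≤ I * K * Real.exp (φ₁ z) := by
  set J := ∫ w : Fin n → ℂ, Real.exp (-δ * ‖w‖ ^ 2) with hJ
  have hJ0 : 0 ≤ J := integral_nonneg fun w => (Real.exp_pos _).le
  refine ⟨‖a‖ * J + 1, by positivity, fun z K hK hw => ?_⟩
  have key : ‖∫ w : Fin n → ℂ, Complex.exp (2 * Ψ z (star w)) * f w *
      (Real.exp (-2 * φ₂ w) : ℂ)‖ ≤ ∫ w : Fin n → ℂ, K * Real.exp (φ₁ z) *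
        Real.exp (-δ * ‖w‖ ^ 2) := by
    apply norm_integral_le_of_norm_le ((aux_integrable δ hδ).const_mul _)
    refine Filter.Eventually.of_forall fun w => ?_
    rw [norm_mul, norm_mul, Complex.norm_exp, Complex.norm_real, Real.norm_eq_abs, Real.abs_exp]
    have h1 : (2 * Ψ z (star w)).re = 2 * (Ψ z (star w)).re := by simp
    rw [h1]
    calc Real.exp (2 * (Ψ z (star w)).re) * ‖f w‖ * Real.exp (-2 * φ₂ w)
        ≤ Real.exp (2 * (Ψ z (star w)).re) *
          (K * Real.exp (φ₂ w + c * ‖z - κ w‖ ^ 2 - δ * ‖w‖ ^ 2)) *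
            Real.exp (-2 * φ₂ w) := by gcongr; exact hw w
      _ = K * Real.exp (2 * (Ψ z (star w)).re + (φ₂ w + c * ‖z - κ w‖ ^ 2 - δ * ‖w‖ ^ 2)
            + (-2 * φ₂ w)) := by
          rw [Real.exp_add, Real.exp_add]; ring
      _ ≤ K * Real.exp (φ₁ z + -δ * ‖w‖ ^ 2) := by
          refine aux_exp hK le_rfl ?_
          have := h z w
          have := mul_le_mul_of_nonneg_left (aux_le_eSq (z - κ w)) hc.le
          linarith
      _ = _ := by rw [Real.exp_add]; ring
  rw [integral_const_mul] at key
  rw [berg, norm_mul]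
  calc _ ≤ ‖a‖ * (K * Real.exp (φ₁ z) * J) := by gcongr
    _ ≤ _ := by nlinarith [mul_nonneg hK (Real.exp_pos (φ₁ z)).le]

lemma aux_equiv {n : ℕ} (κ : (Fin n → ℂ) ≃ₗ[ℝ] (Fin n → ℂ)) :
    ∃ M : ℝ, 0 < M ∧ (∀ x, ‖κ x‖ ≤ M * ‖x‖) ∧ ∀ x, ‖x‖ ≤ M * ‖κ x‖ := by
  let e := κ.toContinuousLinearEquiv
  refine ⟨‖(e : (Fin n → ℂ) →L[ℝ] (Fin n → ℂ))‖ +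
    ‖(e.symm : (Fin n → ℂ) →L[ℝ] (Fin n → ℂ))‖ + 1, by positivity, fun x => ?_, fun x => ?_⟩
  · have := (e : (Fin n → ℂ) →L[ℝ] (Fin n → ℂ)).le_opNorm x
    have h2 : ‖κ x‖ = ‖(e : (Fin n → ℂ) →L[ℝ] (Fin n → ℂ)) x‖ := rfl
    rw [h2]
    nlinarith [norm_nonneg x, mul_nonneg (norm_nonneg
      (e.symm : (Fin n → ℂ) →L[ℝ] (Fin n → ℂ))) (norm_nonneg x)]
  · have := (e.symm : (Fin n → ℂ) →L[ℝ] (Fin n → ℂ)).le_opNorm (κ x)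
    have h2 : (e.symm : (Fin n → ℂ) →L[ℝ] (Fin n → ℂ)) (κ x) = x := e.symm_apply_apply x
    rw [h2] at this
    nlinarith [norm_nonneg (κ x), mul_nonneg (norm_nonneg
      (e : (Fin n → ℂ) →L[ℝ] (Fin n → ℂ))) (norm_nonneg (κ x))]

lemma aux_A {n : ℕ} (a : ℂ) (Ψ : (Fin n → ℂ) → (Fin n → ℂ) → ℂ)
    (φ₁ φ₂ : (Fin n → ℂ) → ℝ) (κ : (Fin n → ℂ) ≃ₗ[ℝ] (Fin n → ℂ)) (c : ℝ) (hc : 0 < c)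
    (h : ∀ z w, 2 * (Ψ z (star w)).re - φ₁ z - φ₂ w ≤ -c * eSq (z - κ w))
    (f : (Fin n → ℂ) → ℂ)
    (hf : ∀ ε : ℝ, 0 < ε → ∃ K : ℝ, 0 < K ∧ ∀ w, ‖f w‖ ≤ K * Real.exp (φ₂ w + ε * ‖w‖ ^ 2)) :
    ∀ ε : ℝ, 0 < ε → ∃ K : ℝ, 0 < K ∧ ∀ z,
      ‖berg a Ψ φ₂ f z‖ ≤ K * Real.exp (φ₁ z + ε * ‖z‖ ^ 2) := by
  intro ε hε
  obtain ⟨M, hM, hM1, hM2⟩ := aux_equiv κ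
  set e := min c ε / (4 * M ^ 2) with he
  have hmin : 0 < min c ε := lt_min hc hε
  have he0 : 0 < e := by positivity
  obtain ⟨K, hK, hfK⟩ := hf e he0
  obtain ⟨I, hI, hb⟩ := aux_berg a Ψ φ₁ φ₂ κ c hc h f e he0
  refine ⟨I * K, by positivity, fun z => ?_⟩
  have := hb z (K * Real.exp (ε * ‖z‖ ^ 2)) (by positivity) fun w => by
    refine (hfK w).trans ?_
    rw [mul_assoc, ← Real.exp_add]
    refine aux_exp hK.le le_rfl ?_
    have h1 : ‖w‖ ≤ M * (‖z‖ + ‖z - κ w‖) := by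
      refine (hM2 w).trans ?_
      gcongr
      have : κ w = z - (z - κ w) := by abel
      calc ‖κ w‖ = ‖z - (z - κ w)‖ := by rw [← this]
        _ ≤ _ := norm_sub_le _ _
    have h2 : ‖w‖ ^ 2 ≤ M ^ 2 * (2 * ‖z‖ ^ 2 + 2 * ‖z - κ w‖ ^ 2) := by
      calc ‖w‖ ^ 2 ≤ (M * (‖z‖ + ‖z - κ w‖)) ^ 2 := by gcongr
        _ = M ^ 2 * (‖z‖ + ‖z - κ w‖) ^ 2 := by ring
        _ ≤ _ := by gcongr; nlinarith [sq_nonneg (‖z‖ - ‖z - κ w‖)]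
    have h3 : 2 * e * ‖w‖ ^ 2 ≤ min c ε * (‖z‖ ^ 2 + ‖z - κ w‖ ^ 2) := by
      calc 2 * e * ‖w‖ ^ 2 ≤ 2 * e * (M ^ 2 * (2 * ‖z‖ ^ 2 + 2 * ‖z - κ w‖ ^ 2)) := by gcongr
        _ = _ := by rw [he]; field_simp; ring
    have h4 := mul_le_mul_of_nonneg_right (min_le_left c ε) (sq_nonneg ‖z - κ w‖)
    have h5 := mul_le_mul_of_nonneg_right (min_le_right c ε) (sq_nonneg ‖z‖)
    linarith
  refine this.trans (le_of_eq ?_)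
  rw [Real.exp_add]; ring

lemma aux_B {n : ℕ} (a : ℂ) (Ψ : (Fin n → ℂ) → (Fin n → ℂ) → ℂ)
    (φ₁ φ₂ : (Fin n → ℂ) → ℝ) (κ : (Fin n → ℂ) ≃ₗ[ℝ] (Fin n → ℂ)) (c : ℝ) (hc : 0 < c)
    (h : ∀ z w, 2 * (Ψ z (star w)).re - φ₁ z - φ₂ w ≤ -c * eSq (z - κ w))
    (f : (Fin n → ℂ) → ℂ)
    (hf : ∀ ε : ℝ, 0 < ε → ∃ K : ℝ, 0 < K ∧ ∀ w, ‖f w‖ ≤ K * Real.exp (φ₂ w + ε * ‖w‖ ^ 2))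
    (V : Set (Fin n → ℂ)) (hVo : IsOpen V) (hVc : IsConic V) (hV0 : (0 : Fin n → ℂ) ∉ V)
    (w₀ : Fin n → ℂ) (hw₀ : w₀ ∈ V) (K₁ c₁ : ℝ) (hK₁ : 0 < K₁) (hc₁ : 0 < c₁)
    (hV : ∀ w ∈ V, ‖f w‖ ≤ K₁ * Real.exp (φ₂ w - c₁ * ‖w‖ ^ 2)) :
    ∃ V' : Set (Fin n → ℂ), IsOpen V' ∧ IsConic V' ∧ (0 : Fin n → ℂ) ∉ V' ∧ κ w₀ ∈ V' ∧
      ∃ K δ : ℝ, 0 < K ∧ 0 < δ ∧ ∀ z ∈ V', ‖berg a Ψ φ₂ f z‖ ≤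
        K * Real.exp (φ₁ z - δ * ‖z‖ ^ 2) := by
  obtain ⟨M, hM, hM1, hM2⟩ := aux_equiv κ
  obtain ⟨r, hr, hball⟩ := Metric.isOpen_iff.1 hVo w₀ hw₀
  have hsc : ∀ t : ℝ, 0 < t → ∀ y : Fin n → ℂ, ‖y - t • w₀‖ < t * r → y ∈ V := by
    intro t ht y hy
    have h1 : t⁻¹ • y ∈ V := by
      apply hball
      rw [Metric.mem_ball, dist_eq_norm]
      have : t⁻¹ • y - w₀ = t⁻¹ • (y - t • w₀) := by
        rw [smul_sub, smul_smul, inv_mul_cancel₀ ht.ne', one_smul]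
      rw [this, norm_smul, Real.norm_eq_abs, abs_of_pos (by positivity)]
      rw [inv_mul_lt_iff₀ ht]; exact hy
    have := hVc _ h1 t ht
    rwa [smul_smul, mul_inv_cancel₀ ht.ne', one_smul] at this
  have hκs : Continuous κ.symm := κ.symm.toContinuousLinearEquiv.continuous
  set Q := (‖w₀‖ + r / 2) / (r / 2) with hQ
  have hQ0 : 0 < Q := by positivity
  set L := M ^ 2 * Q + (Q + 1) * M with hL
  have hL0 : 0 < L := by positivity
  set e := c / (3 * L ^ 2) with he
  have he0 : 0 < e := by positivity
  set δ := min e (min (c / 2) (c₁ / (2 * M ^ 2 + 1))) with hδ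
  have hδ0 : 0 < δ := by positivity
  obtain ⟨K₂, hK₂, hfK⟩ := hf e he0
  obtain ⟨I, hI, hb⟩ := aux_berg a Ψ φ₁ φ₂ κ c hc h f δ hδ0
  refine ⟨{z | ∃ t : ℝ, 0 < t ∧ ‖κ.symm z - t • w₀‖ < t * (r / 2)}, ?_, ?_, ?_, ?_,
    I * (K₁ + K₂), δ, by positivity, hδ0, ?_⟩
  · have : {z | ∃ t : ℝ, 0 < t ∧ ‖κ.symm z - t • w₀‖ < t * (r / 2)} =
        ⋃ t : ℝ, ⋃ _ : 0 < t, {z | ‖κ.symm z - t • w₀‖ < t * (r / 2)} := by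
      ext z; simp
    rw [this]
    exact isOpen_iUnion fun t => isOpen_iUnion fun _ =>
      isOpen_lt ((hκs.sub continuous_const).norm) continuous_const
  · rintro z ⟨t, ht, hz⟩ s hs
    refine ⟨s * t, by positivity, ?_⟩
    rw [map_smul, ← smul_smul, ← smul_sub, norm_smul, Real.norm_eq_abs, abs_of_pos hs, mul_assoc]
    gcongr
  · rintro ⟨t, ht, hz⟩
    rw [map_zero] at hz
    exact hV0 (hsc t ht 0 (hz.trans (by nlinarith [mul_pos ht hr])))
  · exact ⟨1, one_pos, by simpa using hr⟩
  · rintro z ⟨t, ht, hz⟩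
    have := hb z ((K₁ + K₂) * Real.exp (-δ * ‖z‖ ^ 2)) (by positivity) fun w => by
      rw [mul_assoc, ← Real.exp_add]
      set d := ‖z - κ w‖ with hd
      have hd0 : 0 ≤ d := norm_nonneg _
      by_cases hw : w ∈ V
      · refine (hV w hw).trans (aux_exp hK₁.le (by linarith) ?_)
        have h1 : ‖z‖ ≤ d + M * ‖w‖ := by
          have : z = (z - κ w) + κ w := by abel
          calc ‖z‖ = ‖(z - κ w) + κ w‖ := by rw [← this]
            _ ≤ d + ‖κ w‖ := norm_add_le _ _
            _ ≤ _ := by gcongr; exact hM1 w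
        have h2 : ‖z‖ ^ 2 ≤ 2 * d ^ 2 + 2 * M ^ 2 * ‖w‖ ^ 2 := by
          calc ‖z‖ ^ 2 ≤ (d + M * ‖w‖) ^ 2 := by gcongr
            _ ≤ _ := by nlinarith [sq_nonneg (d - M * ‖w‖)]
        have h3 : δ ≤ c / 2 := (min_le_right _ _).trans (min_le_left _ _)
        have h4 : δ * (2 * M ^ 2 + 1) ≤ c₁ := by
          rw [← le_div_iff₀ (by positivity)]
          exact (min_le_right _ _).trans (min_le_right _ _)
        have h5 := mul_le_mul_of_nonneg_left h2 hδ0.le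
        have h6 := mul_le_mul_of_nonneg_right h3 (sq_nonneg d)
        have h7 := mul_le_mul_of_nonneg_right h4 (sq_nonneg ‖w‖)
        nlinarith
      · refine (hfK w).trans (aux_exp hK₂.le (by linarith) ?_)
        set y := κ.symm z with hy
        have hzy : z = κ y := by simp [hy]
        have h1 : t * r ≤ ‖w - t • w₀‖ := not_lt.1 fun hh => hw (hsc t ht w hh)
        have h2 : t * (r / 2) ≤ ‖y - w‖ := by
          have : w - t • w₀ = (y - t • w₀) - (y - w) := by abel
          have h3 := norm_sub_le (y - t • w₀) (y - w)
          rw [← this] at h3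
          linarith
        have h3 : ‖y‖ ≤ Q * ‖y - w‖ := by
          have : y = (y - t • w₀) + t • w₀ := by abel
          calc ‖y‖ = ‖(y - t • w₀) + t • w₀‖ := by rw [← this]
            _ ≤ ‖y - t • w₀‖ + ‖t • w₀‖ := norm_add_le _ _
            _ ≤ t * (r / 2) + t * ‖w₀‖ := by
                rw [norm_smul, Real.norm_eq_abs, abs_of_pos ht]; gcongr
            _ = Q * (t * (r / 2)) := by rw [hQ]; field_simp; ring
            _ ≤ _ := by gcongr
        have h4 : ‖y - w‖ ≤ M * d := by
          have := hM2 (y - w)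
          rwa [map_sub, ← hzy] at this
        have h5 : ‖z‖ ≤ L * d := by
          calc ‖z‖ ≤ M * ‖y‖ := by rw [hzy]; exact hM1 y
            _ ≤ M * (Q * (M * d)) := by gcongr; exact h3.trans (by gcongr)
            _ = M ^ 2 * Q * d := by ring
            _ ≤ L * d := by gcongr; rw [hL]; linarith [show 0 < (Q + 1) * M by positivity]
        have h6 : ‖w‖ ≤ L * d := by
          have : w = y - (y - w) := by abel
          calc ‖w‖ = ‖y - (y - w)‖ := by rw [← this]
            _ ≤ ‖y‖ + ‖y - w‖ := norm_sub_le _ _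
            _ ≤ (Q + 1) * ‖y - w‖ := by linarith
            _ ≤ (Q + 1) * (M * d) := by gcongr
            _ = (Q + 1) * M * d := by ring
            _ ≤ L * d := by gcongr; rw [hL]; linarith [show 0 < M ^ 2 * Q by positivity]
        have h7 : ‖z‖ ^ 2 ≤ (L * d) ^ 2 := by gcongr
        have h8 : ‖w‖ ^ 2 ≤ (L * d) ^ 2 := by gcongr
        have h9 : δ ≤ e := min_le_left _ _
        have h10 : e * (3 * (L * d) ^ 2) = c * d ^ 2 := by rw [he]; field_simp
        have h11 := mul_le_mul_of_nonneg_right h9 (sq_nonneg ‖z‖)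
        have h12 := mul_le_mul_of_nonneg_right h9 (sq_nonneg ‖w‖)
        have h13 := mul_le_mul_of_nonneg_left h7 he0.le
        have h14 := mul_le_mul_of_nonneg_left h8 he0.le
        linarith
    refine this.trans (le_of_eq ?_)
    rw [sub_eq_add_neg, Real.exp_add]
    ring_nf

lemma aux_wf {n : ℕ} (Φ : (Fin n → ℂ) → ℝ) (u : (Fin n → ℂ) → ℂ) (z₀ : Fin n → ℂ) :
    z₀ ∈ wf Φ u ↔ z₀ ≠ 0 ∧ ¬ ∃ V : Set (Fin n → ℂ), IsOpen V ∧ IsConic V ∧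
      (0 : Fin n → ℂ) ∉ V ∧ z₀ ∈ V ∧
      ∃ C c : ℝ, 0 < C ∧ 0 < c ∧ ∀ z ∈ V, ‖u z‖ ≤ C * Real.exp (Φ z - c * ‖z‖ ^ 2) := by
  unfold wf
  rw [Set.mem_setOf_eq, and_congr_right_iff]
  intro _
  rw [not_iff_not]
  constructor
  · rintro ⟨V, h1, h2, h3, h4, C, c, hC, hc, h⟩
    refine ⟨V, h1, h2, h3, h4, C, c, hC, hc, fun z hz => (h z hz).trans ?_⟩
    gcongr
    exact aux_le_eSq z
  · rintro ⟨V, h1, h2, h3, h4, C, c, hC, hc, h⟩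
    refine ⟨V, h1, h2, h3, h4, C, c / (n + 1), hC, by positivity, fun z hz => (h z hz).trans ?_⟩
    refine aux_exp hC.le le_rfl (sub_le_sub_left ?_ _)
    have := mul_le_mul_of_nonneg_left (aux_eSq_le z) (show 0 ≤ c / (n + 1) by positivity)
    refine this.trans (le_of_eq ?_)
    field_simp

lemma aux_quad {n : ℕ} {Φ : (Fin n → ℂ) → ℝ} (h : IsRQuad Φ) :
    Continuous Φ ∧ ∀ (t : ℝ) z, Φ (t • z) = t ^ 2 * Φ z := by
  obtain ⟨B, hB⟩ := h
  constructor
  · have : Φ = fun z => B z z := funext hB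
    rw [this]
    let B' : (Fin n → ℂ) →ₗ[ℝ] (Fin n → ℂ) →L[ℝ] ℝ :=
      (LinearMap.toContinuousLinearMap (𝕜 := ℝ) (E := Fin n → ℂ) (F' := ℝ)).toLinearMap ∘ₗ B
    have hc : Continuous B' := B'.continuous_of_finiteDimensional
    exact hc.clm_apply continuous_id
  · intro t z
    simp [hB]; ring

/-- Combining Statements 9–12: with `Φ̃ ≤ Φ`, `κ♭` an `ℝ`-linear
isomorphism preserving `Rad(Φ − Φ̃)`, a direct Bergman quantization `G` (with phase `Ψ`,
real part `Φ̃(z) + Φ(w) − R(z,w)`, `R ≍ |z − κ♭(w)|²`), an inverse quantization `G̃`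
(with phase `Ψ̃` satisfying `2 Re Ψ̃(z,w̄) − Φ(z) − Φ̃(w) ≤ −c'|z − (κ♭)⁻¹(w)|²`), and
`G̃ ∘ G = id` on functions of polynomially weighted growth, one has
`WF^{1/2}_Φ(Gu) = κ♭(WF^{1/2}_Φ(u)) ∩ Rad(Φ − Φ̃)` for all such `u`. -/
theorem stmt_13 (n : ℕ) (hn : 1 ≤ n) (Φ Φt : (Fin n → ℂ) → ℝ)
    (hΦ : IsSPSH Φ) (hΦt : IsSPSH Φt) (hle : ∀ z, Φt z ≤ Φ z)
    (κ : (Fin n → ℂ) ≃ₗ[ℝ] (Fin n → ℂ))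
    (hrad : (fun w => κ w) '' {z : Fin n → ℂ | Φ z - Φt z = 0}
        = {z : Fin n → ℂ | Φ z - Φt z = 0})
    -- (i) the direct quantization `G`
    (a : ℂ) (Ψ : (Fin n → ℂ) → (Fin n → ℂ) → ℂ) (hΨ : IsCQuad2 Ψ)
    (R : (Fin n → ℂ) → (Fin n → ℂ) → ℝ) (hRq : IsRQuadPair R)
    (hR0 : ∀ z w, 0 ≤ R z w)
    (hre : ∀ z w : Fin n → ℂ, 2 * (Ψ z (star w)).re = Φt z + Φ w - R z w)
    (C c : ℝ) (hC : 0 < C) (hc : 0 < c)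
    (hsand : ∀ z w : Fin n → ℂ, c * eSq (z - κ w) ≤ R z w ∧ R z w ≤ C * eSq (z - κ w))
    -- (ii) the inverse quantization `G̃`
    (at_ : ℂ) (Ψt : (Fin n → ℂ) → (Fin n → ℂ) → ℂ) (hΨt : IsCQuad2 Ψt)
    (c' : ℝ) (hc' : 0 < c')
    (hest : ∀ z w : Fin n → ℂ,
        2 * (Ψt z (star w)).re - Φ z - Φt w ≤ -c' * eSq (z - κ.symm w))
    -- (iii) `G̃ (G u) = u` on functions of polynomially weighted growth
    (hinv : ∀ u : (Fin n → ℂ) → ℂ, Differentiable ℂ u →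
        (∃ C₀ : ℝ, 0 < C₀ ∧ ∃ N : ℝ, ∀ z : Fin n → ℂ, ‖u z‖ ≤ C₀ * jb z ^ N * Real.exp (Φ z)) →
        berg at_ Ψt Φt (berg a Ψ Φ u) = u) :
    ∀ u : (Fin n → ℂ) → ℂ, Differentiable ℂ u →
      (∃ C₀ : ℝ, 0 < C₀ ∧ ∃ N : ℝ, ∀ z : Fin n → ℂ, ‖u z‖ ≤ C₀ * jb z ^ N * Real.exp (Φ z)) →
      wf Φ (berg a Ψ Φ u) =
        ((fun w => κ w) '' wf Φ u) ∩ {z : Fin n → ℂ | Φ z - Φt z = 0} := by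
  intro u hu hgrow
  have hG : ∀ z w, 2 * (Ψ z (star w)).re - Φt z - Φ w ≤ -c * eSq (z - κ w) := by
    intro z w
    have := (hsand z w).1
    rw [hre z w]; linarith
  have hus : ∀ ε : ℝ, 0 < ε → ∃ K : ℝ, 0 < K ∧ ∀ w, ‖u w‖ ≤ K * Real.exp (Φ w + ε * ‖w‖ ^ 2) := by
    intro ε hε
    obtain ⟨C₀, hC₀, N, hN⟩ := hgrow
    obtain ⟨K, hK, hj⟩ := aux_jb (n := n) N ε hε
    refine ⟨C₀ * K, by positivity, fun w => (hN w).trans ?_⟩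
    calc C₀ * jb w ^ N * Real.exp (Φ w)
        ≤ C₀ * (K * Real.exp (ε * ‖w‖ ^ 2)) * Real.exp (Φ w) := by gcongr; exact hj w
      _ = _ := by rw [Real.exp_add]; ring
  have hvs := aux_A a Ψ Φt Φ κ c hc hG u hus
  have hinvu := hinv u hu hgrow
  obtain ⟨hΦc, hΦh⟩ := aux_quad hΦ.1
  obtain ⟨hΦtc, hΦth⟩ := aux_quad hΦt.1
  set v := berg a Ψ Φ u with hv
  ext z₀
  constructor
  · intro hz
    rw [aux_wf] at hz
    obtain ⟨hz0, hzV⟩ := hz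
    refine ⟨⟨κ.symm z₀, ?_, by simp⟩, ?_⟩
    · rw [aux_wf]
      refine ⟨by simpa using hz0, ?_⟩
      rintro ⟨V, h1, h2, h3, h4, K, c₁, hK, hc₁, hb⟩
      obtain ⟨V', g1, g2, g3, g4, K', δ, hK', hδ, hb'⟩ :=
        aux_B a Ψ Φt Φ κ c hc hG u hus V h1 h2 h3 _ h4 K c₁ hK hc₁ hb
      rw [LinearEquiv.apply_symm_apply] at g4
      refine hzV ⟨V', g1, g2, g3, g4, K', δ, hK', hδ, fun z hz => (hb' z hz).trans ?_⟩
      gcongr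
      exact hle z
    · by_contra hne
      have hpos : 0 < Φ z₀ - Φt z₀ :=
        lt_of_le_of_ne (sub_nonneg.2 (hle z₀)) (Ne.symm hne)
      have hn0 : 0 < ‖z₀‖ := norm_pos_iff.2 hz0
      set η := (Φ z₀ - Φt z₀) / (2 * ‖z₀‖ ^ 2) with hη
      have hη0 : 0 < η := by positivity
      obtain ⟨K, hK, hb⟩ := hvs (η / 2) (by positivity)
      refine hzV ⟨{z | z ≠ 0 ∧ η * ‖z‖ ^ 2 < Φ z - Φt z}, ?_, ?_, by simp, ⟨hz0, ?_⟩, K, η / 2, hK,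
        by positivity, ?_⟩
      · exact isOpen_ne.inter (isOpen_lt (by fun_prop) (hΦc.sub hΦtc))
      · rintro z ⟨hz1, hz2⟩ t ht
        refine ⟨smul_ne_zero ht.ne' hz1, ?_⟩
        rw [hΦh, hΦth, norm_smul, mul_pow, Real.norm_eq_abs, sq_abs]
        nlinarith [mul_lt_mul_of_pos_left hz2 (show 0 < t ^ 2 by positivity)]
      · have : η * ‖z₀‖ ^ 2 = (Φ z₀ - Φt z₀) / 2 := by rw [hη]; field_simp
        rw [this]; linarith
      · rintro z ⟨_, hz2⟩
        refine (hb z).trans (aux_exp hK.le le_rfl ?_)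
        linarith
  · rintro ⟨⟨w₀, hw₀, rfl⟩, hR⟩
    rw [aux_wf] at hw₀
    obtain ⟨hw0, hwV⟩ := hw₀
    have hκ0 : κ w₀ ≠ 0 := by simpa using hw0
    simp only [Set.mem_setOf_eq] at hR
    rw [aux_wf]
    refine ⟨hκ0, ?_⟩
    rintro ⟨V, h1, h2, h3, h4, K, c₁, hK, hc₁, hb⟩
    apply hwV
    have hn0 : 0 < ‖κ w₀‖ := norm_pos_iff.2 hκ0
    obtain ⟨V', g1, g2, g3, g4, g5⟩ :=
      aux_B at_ Ψt Φ Φt κ.symm c' hc' hest v hvs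
        (V ∩ {z | Φ z - Φt z < c₁ / 2 * ‖z‖ ^ 2}) 
        (h1.inter (isOpen_lt (hΦc.sub hΦtc) (by fun_prop)))
        (by
          rintro z ⟨hz1, hz2⟩ t ht
          refine ⟨h2 z hz1 t ht, ?_⟩
          simp only [Set.mem_setOf_eq] at hz2 ⊢
          rw [hΦh, hΦth, norm_smul, mul_pow, Real.norm_eq_abs, sq_abs]
          nlinarith [mul_lt_mul_of_pos_left hz2 (show 0 < t ^ 2 by positivity)])
        (fun hh => h3 hh.1) (κ w₀)
        ⟨h4, by
          simp only [Set.mem_setOf_eq]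
          rw [hR]; positivity⟩ K (c₁ / 2) hK (by positivity)
        (by
          rintro w ⟨hw1, hw2⟩
          simp only [Set.mem_setOf_eq] at hw2
          refine (hb w hw1).trans (aux_exp hK.le le_rfl ?_)
          linarith)
    rw [LinearEquiv.symm_apply_apply] at g4
    rw [hinvu] at g5
    exact ⟨V', g1, g2, g3, g4, g5⟩
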